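/- Bichromatic two-extremes lemma: There are absolute constants C > 0 and K₂ > 0 with the following property. Let P and Q be disjoint finite sets of points in the Euclidean plane ℝ² with |P| = |Q| = n. Then at least one of the following holds: (A) the number of bichromatic induced lines of (P, Q) is at least C · n²; or (B) there is a line ℓ incident on at least K₂ · n points of P and at least K₂ · n points of Q. -/

import Mathlib

open Set

noncomputable section

/-- The line through two points of the plane, as a set. -/
def lineThrough (p q : ℝ × ℝ) : Set (ℝ × ℝ) := (affineSpan ℝ {p, q} : AffineSubspace ℝ (ℝ × ℝ))

/-- A subset of the plane is a line if it is the affine span of two distinct points. -/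
def IsLine (L : Set (ℝ × ℝ)) : Prop := ∃ p q : ℝ × ℝ, p ≠ q ∧ L = lineThrough p q

/-- The richness of a line `L` with respect to a finite point set `S`:
the number of points of `S` incident on `L`. -/
def richness (S : Finset (ℝ × ℝ)) (L : Set (ℝ × ℝ)) : ℕ := ((S : Set (ℝ × ℝ)) ∩ L).ncard

/-- The lines induced by a finite point set `S`: lines passing through
at least two distinct points of `S`. -/
def InducedLines (S : Finset (ℝ × ℝ)) : Set (Set (ℝ × ℝ)) :=
  {L | IsLine L ∧ ∃ p ∈ S, ∃ q ∈ S, p ≠ q ∧ p ∈ L ∧ q ∈ L}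

/-- The bichromatic induced lines of a bichromatic point set `(P, Q)`:
lines incident on at least one point of `P` and at least one point of `Q`
(for disjoint `P`, `Q` such a line passes through two distinct points of `P ∪ Q`). -/
def BichromLines (P Q : Finset (ℝ × ℝ)) : Set (Set (ℝ × ℝ)) :=
  {L | IsLine L ∧ (∃ p ∈ P, p ∈ L) ∧ (∃ q ∈ Q, q ∈ L)}

/-!
By double counting, `n²` is the sum of `|P ∩ L| |Q ∩ L|` over the bichromatic lines `L`. Lines of
bounded richness contribute at most a constant times their number. If no line is rich in both
colors, lines of richness proportional to `n` contribute little, because `|P ∩ L| |Q ∩ L|` is then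
small compared with the squared richness, whose sum is at most quadratic in `n`.

For the lines of intermediate richness, as in Beck's theorem, the sum of the squared richness is a
small multiple of `n²`. Instead of the Szemerédi–Trotter theorem, we use a ham-sandwich cut: it
divides the points into four quadrants of comparable size, and each line misses one of them, so
that by Cauchy–Schwarz the bound for the quadrants implies a bound for the whole set that is better
by a constant factor. The cut is unavailable only if some line is very rich, and removing the points
of that line gives the same gain. A bounded number of iterations suffices.
-/

open scoped Finset

section Lines

variable {L L' : Set (ℝ × ℝ)}

theorem left_mem_lineThrough (p q : ℝ × ℝ) : p ∈ lineThrough p q :=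
  left_mem_affineSpan_pair ℝ p q

theorem right_mem_lineThrough (p q : ℝ × ℝ) : q ∈ lineThrough p q :=
  right_mem_affineSpan_pair ℝ p q

theorem mem_lineThrough {p q x : ℝ × ℝ} :
    x ∈ lineThrough p q ↔ ∃ t : ℝ, x = p + t • (q - p) := by
  rw [lineThrough, SetLike.mem_coe, ← vsub_vadd x p, vadd_left_mem_affineSpan_pair]
  simp only [vsub_eq_sub, vadd_eq_add, sub_add_cancel, eq_sub_iff_add_eq', eq_comm]

theorem IsLine.eq_lineThrough (hL : IsLine L) {p q : ℝ × ℝ} (hpq : p ≠ q) (hp : p ∈ L)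
    (hq : q ∈ L) : L = lineThrough p q := by
  obtain ⟨a, b, -, rfl⟩ := hL
  exact congrArg SetLike.coe
    (affineSpan_pair_eq_of_mem_of_mem_of_ne hp hq hpq).symm

theorem IsLine.inter_subsingleton (hL : IsLine L) (hL' : IsLine L') (hne : L ≠ L') :
    (L ∩ L').Subsingleton := by
  rintro p ⟨hp, hp'⟩ q ⟨hq, hq'⟩
  by_contra hpq
  exact hne ((hL.eq_lineThrough hpq hp hq).trans (hL'.eq_lineThrough hpq hp' hq').symm)

theorem isLine_setOf_linearMap_eq {f : ℝ × ℝ →ₗ[ℝ] ℝ} (hf : f ≠ 0) (c : ℝ) :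
    IsLine {x | f x = c} := by
  set a := f (1, 0)
  set b := f (0, 1)
  have f_apply (x : ℝ × ℝ) : f x = x.1 * a + x.2 * b := by
    rw [← smul_eq_mul, ← smul_eq_mul, ← map_smul, ← map_smul, ← map_add]
    simp
  have hab : a ^ 2 + b ^ 2 ≠ 0 := by
    contrapose! hf
    have ha : a = 0 := by nlinarith
    have hb : b = 0 := by nlinarith
    ext <;> simpa
  -- The base point is the foot of the perpendicular from the origin.
  set p : ℝ × ℝ := (c / (a ^ 2 + b ^ 2)) • (a, b) with hp
  refine ⟨p, p + (-b, a), ?_, ?_⟩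
  · simp only [ne_eq, left_eq_add, Prod.mk_eq_zero, neg_eq_zero]
    rintro ⟨hb, ha⟩
    simp [ha, hb] at hab
  · ext x
    rw [mem_lineThrough, Set.mem_ofPred_eq, f_apply, add_sub_cancel_left]
    simp only [hp, Prod.smul_mk, smul_eq_mul, Prod.mk_add_mk, mul_neg]
    constructor
    · intro hx
      refine ⟨(x.2 * a - x.1 * b) / (a ^ 2 + b ^ 2), ?_⟩
      ext <;> rw [← hx] <;> field_simp <;> ring
    · rintro ⟨t, rfl⟩
      field_simp
      ring

/-- The half-open quadrant containing `p`, among the four cut out by the level sets `f = a` and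
`g = b`: each coordinate records whether `p` lies strictly below the corresponding level. -/
def quadrant (f g : ℝ × ℝ →ₗ[ℝ] ℝ) (a b : ℝ) (p : ℝ × ℝ) : Bool × Bool :=
  (f p < a, g p < b)

-- Meeting one pair of opposite quadrants forces the slopes of `f` and `g` along the line to have
-- the same sign, meeting the other pair forces them to have opposite signs.
theorem IsLine.exists_forall_quadrant_ne (hL : IsLine L) (f g : ℝ × ℝ →ₗ[ℝ] ℝ) (a b : ℝ) :
    ∃ i, ∀ p ∈ L, quadrant f g a b p ≠ i := by
  obtain ⟨u, v, -, rfl⟩ := hL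
  have slope (h : ℝ × ℝ →ₗ[ℝ] ℝ) (s t : ℝ) :
      h (u + t • (v - u)) - h (u + s • (v - u)) = (t - s) * h (v - u) := by
    simp only [map_add, map_smul, smul_eq_mul]
    ring
  by_contra! hmeets
  obtain ⟨p, hp, hpq⟩ := hmeets (true, true)
  obtain ⟨q, hq, hqq⟩ := hmeets (false, false)
  obtain ⟨p', hp', hpq'⟩ := hmeets (true, false)
  obtain ⟨q', hq', hqq'⟩ := hmeets (false, true)
  simp only [quadrant, Prod.mk.injEq, decide_eq_true_eq, decide_eq_false_iff_not, not_lt]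
    at hpq hqq hpq' hqq'
  obtain ⟨s, rfl⟩ := mem_lineThrough.mp hp
  obtain ⟨t, rfl⟩ := mem_lineThrough.mp hq
  obtain ⟨s', rfl⟩ := mem_lineThrough.mp hp'
  obtain ⟨t', rfl⟩ := mem_lineThrough.mp hq'
  have same : 0 < ((t - s) * f (v - u)) * ((t - s) * g (v - u)) := by
    rw [← slope, ← slope]
    exact mul_pos (by linarith) (by linarith)
  have opposite : ((t' - s') * f (v - u)) * ((t' - s') * g (v - u)) < 0 := by
    rw [← slope, ← slope]
    exact mul_neg_of_pos_of_neg (by linarith) (by linarith)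
  have pos : 0 < f (v - u) * g (v - u) :=
    pos_of_mul_pos_right (by linarith) (sq_nonneg (t - s))
  nlinarith [sq_nonneg (t' - s')]

end Lines

section Medians

variable {α β τ : Type*} [LinearOrder β] {X Z : Finset α}

/-- `m` is a median of the values of `f` on `X`: at most half of the points of `X` lie strictly on
either side of `m`. Medians in this sense need not be unique. -/
structure IsMedian (X : Finset α) (f : α → β) (m : β) : Prop where
  two_mul_card_lt_le : 2 * #{p ∈ X | f p < m} ≤ #X
  two_mul_card_gt_le : 2 * #{p ∈ X | m < f p} ≤ #X

theorem IsMedian.le_of_forall_le {f : α → β} {a b : β} (ha : IsMedian X f a)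
    (hb : IsMedian Z f b) (hX : X.Nonempty) (hZ : Z.Nonempty)
    (h : ∀ p ∈ X, ∀ q ∈ Z, f p ≤ f q) : a ≤ b := by
  obtain ⟨p, hp, hap⟩ : ∃ p ∈ X, a ≤ f p := by
    by_contra! hlt
    have := ha.two_mul_card_lt_le
    rw [Finset.filter_true_of_mem hlt] at this
    have := hX.card_pos
    lia
  obtain ⟨q, hq, hqb⟩ : ∃ q ∈ Z, f q ≤ b := by
    by_contra! hgt
    have := hb.two_mul_card_gt_le
    rw [Finset.filter_true_of_mem hgt] at this
    have := hZ.card_pos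
    lia
  exact hap.trans ((h p hp q hq).trans hqb)

theorem IsMedian.card_le_two_mul_card_ge {f : α → β} {m : β} (h : IsMedian X f m) :
    #X ≤ 2 * #{p ∈ X | ¬ f p < m} := by
  have := h.two_mul_card_lt_le
  have := X.card_filter_add_card_filter_not (f · < m)
  lia

theorem IsMedian.card_le_two_mul_card_lt_add {f : α → β} {m : β} (h : IsMedian X f m) :
    #X ≤ 2 * #{p ∈ X | f p < m} + 2 * #{p ∈ X | f p = m} := by
  classical
  have not_lt_le : #{p ∈ X | ¬ f p < m} ≤ #{p ∈ X | f p = m} + #{p ∈ X | m < f p} := by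
    rw [← Finset.card_union_of_disjoint (by grind [Finset.disjoint_left])]
    exact Finset.card_le_card (by grind)
  have := h.two_mul_card_gt_le
  have := X.card_filter_add_card_filter_not (f · < m)
  lia

theorem powersetCard_half_nonempty (X : Finset α) :
    (X.powersetCard ((#X + 1) / 2)).Nonempty :=
  Finset.powersetCard_nonempty.mpr (by lia)

theorem nonempty_of_mem_powersetCard_half {T : Finset α} (hX : X.Nonempty)
    (hT : T ∈ X.powersetCard ((#X + 1) / 2)) : T.Nonempty := by
  have := (Finset.mem_powersetCard.mp hT).2
  have := hX.card_pos
  exact Finset.card_pos.mp (by lia)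

/-- The upper median of the values of `f` on `X`, written as a maximum of minima over the subsets
of half the size so that it visibly depends continuously on `f`. -/
def upperMedian (X : Finset α) (hX : X.Nonempty) (f : α → β) : β :=
  (X.powersetCard ((#X + 1) / 2)).attach.sup'
    (Finset.attach_nonempty_iff.mpr (powersetCard_half_nonempty X))
    fun T ↦ T.1.inf' (nonempty_of_mem_powersetCard_half hX T.2) f

theorem continuous_upperMedian [TopologicalSpace β] [OrderClosedTopology β] [TopologicalSpace τ]
    (hX : X.Nonempty) {f : τ → α → β} (hf : ∀ p ∈ X, Continuous (f · p)) :
    Continuous fun s ↦ upperMedian X hX (f s) :=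
  Continuous.finset_sup'_apply _ fun T _ ↦ Continuous.finset_inf'_apply _ fun p hp ↦
    hf p ((Finset.mem_powersetCard.mp T.2).1 hp)

theorem isMedian_upperMedian (hX : X.Nonempty) (f : α → β) :
    IsMedian X f (upperMedian X hX f) where
  two_mul_card_lt_le := by
    classical
    obtain ⟨T, -, hT⟩ := Finset.exists_mem_eq_sup'
      (Finset.attach_nonempty_iff.mpr (powersetCard_half_nonempty X))
      fun T : X.powersetCard ((#X + 1) / 2) ↦ T.1.inf' (nonempty_of_mem_powersetCard_half hX T.2) f
    obtain ⟨hTX, hTcard⟩ := Finset.mem_powersetCard.mp T.2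
    have below_subset : {p ∈ X | f p < upperMedian X hX f} ⊆ X \ T.1 := by
      intro p hp
      obtain ⟨hpX, hpf⟩ := Finset.mem_filter.mp hp
      rw [upperMedian, hT] at hpf
      exact Finset.mem_sdiff.mpr ⟨hpX, fun hpT ↦ hpf.not_ge (Finset.inf'_le _ hpT)⟩
    have := Finset.card_le_card below_subset
    rw [Finset.card_sdiff_of_subset hTX] at this
    lia
  two_mul_card_gt_le := by
    by_contra! hmany
    obtain ⟨T, hT, hTcard⟩ := Finset.exists_subset_card_eq
      (show (#X + 1) / 2 ≤ #{p ∈ X | upperMedian X hX f < f p} by lia)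
    have hTmem : T ∈ X.powersetCard ((#X + 1) / 2) :=
      Finset.mem_powersetCard.mpr ⟨hT.trans (Finset.filter_subset _ _), hTcard⟩
    have inf_le : T.inf' (nonempty_of_mem_powersetCard_half hX hTmem) f ≤ upperMedian X hX f :=
      Finset.le_sup' (fun T : X.powersetCard ((#X + 1) / 2) ↦
        T.1.inf' (nonempty_of_mem_powersetCard_half hX T.2) f) (Finset.mem_attach _ ⟨T, hTmem⟩)
    refine inf_le.not_gt ((Finset.lt_inf'_iff _).mpr fun p hp ↦ ?_)
    exact (Finset.mem_filter.mp (hT hp)).2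

theorem exists_sub_mul_le_sub_mul {g : α → ℝ} (hg : ∀ p ∈ X, ∀ q ∈ Z, g p < g q) (h : α → ℝ) :
    ∃ s : ℝ, ∀ p ∈ X, ∀ q ∈ Z, h q - s * g q ≤ h p - s * g p := by
  have : ∀ᶠ s : ℝ in Filter.atTop, ∀ p ∈ X, ∀ q ∈ Z, h q - s * g q ≤ h p - s * g p := by
    simp only [Finset.eventually_all]
    intro p hp q hq
    filter_upwards [Filter.eventually_ge_atTop ((h q - h p) / (g q - g p))] with s hs
    rw [div_le_iff₀ (sub_pos.mpr (hg p hp q hq))] at hs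
    linarith
  exact this.exists

-- Ham sandwich: as `s` runs from `-∞` to `∞`, the medians of `X` and `Z` swap order.
theorem exists_common_isMedian {g : α → ℝ} (hX : X.Nonempty) (hZ : Z.Nonempty)
    (hg : ∀ p ∈ X, ∀ q ∈ Z, g p < g q) (h : α → ℝ) :
    ∃ s b : ℝ, IsMedian X (fun p ↦ h p - s * g p) b ∧ IsMedian Z (fun p ↦ h p - s * g p) b := by
  set μ : (Y : Finset α) → Y.Nonempty → ℝ → ℝ :=
    fun Y hY s ↦ upperMedian Y hY fun p ↦ h p - s * g p
  have μ_cont (Y hY) : Continuous (μ Y hY) := continuous_upperMedian hY fun p _ ↦ by fun_prop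
  have μ_median (Y hY s) : IsMedian Y (fun p ↦ h p - s * g p) (μ Y hY s) :=
    isMedian_upperMedian hY _
  obtain ⟨s, hs⟩ := exists_sub_mul_le_sub_mul hg h
  obtain ⟨t, ht⟩ := exists_sub_mul_le_sub_mul hg (-h)
  have le_at_s : μ Z hZ s ≤ μ X hX s :=
    (μ_median Z hZ s).le_of_forall_le (μ_median X hX s) hZ hX fun q hq p hp ↦ hs p hp q hq
  have le_at_neg_t : μ X hX (-t) ≤ μ Z hZ (-t) := by
    refine (μ_median X hX _).le_of_forall_le (μ_median Z hZ _) hX hZ fun p hp q hq ↦ ?_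
    have := ht p hp q hq
    simp only [Pi.neg_apply] at this
    linarith
  obtain ⟨u, hu⟩ := mem_range_of_exists_le_of_exists_ge ((μ_cont X hX).sub (μ_cont Z hZ))
    ⟨-t, sub_nonpos.mpr le_at_neg_t⟩ ⟨s, sub_nonneg.mpr le_at_s⟩
  exact ⟨u, μ X hX u, μ_median X hX u, sub_eq_zero.mp hu ▸ μ_median Z hZ u⟩

end Medians

section Richness

variable (S : Finset (ℝ × ℝ)) (L : Set (ℝ × ℝ))

theorem richness_eq_card_filter [DecidablePred (· ∈ L)] : richness S L = #{p ∈ S | p ∈ L} := by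
  rw [richness, ← Set.ncard_coe_finset, Finset.coe_filter]
  rfl

theorem richness_pos_iff {S : Finset (ℝ × ℝ)} {L : Set (ℝ × ℝ)} :
    0 < richness S L ↔ ∃ p ∈ S, p ∈ L :=
  Set.ncard_pos (S.finite_toSet.inter_of_left L)

theorem richness_mono {S T : Finset (ℝ × ℝ)} (hST : S ⊆ T) (L : Set (ℝ × ℝ)) :
    richness S L ≤ richness T L :=
  Set.ncard_le_ncard (Set.inter_subset_inter_left L (Finset.coe_subset.mpr hST))

theorem richness_eq_sum_filter {ι : Type*} [Fintype ι] [DecidableEq ι] (σ : ℝ × ℝ → ι) :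
    richness S L = ∑ i, richness {p ∈ S | σ p = i} L := by
  classical
  simp only [richness_eq_card_filter, Finset.filter_comm (σ · = _)]
  exact Finset.card_eq_sum_card_fiberwise fun _ _ ↦ Finset.mem_univ _

theorem richness_filter_add_richness_filter_not (π : ℝ × ℝ → Prop) [DecidablePred π] :
    richness {p ∈ S | π p} L + richness {p ∈ S | ¬ π p} L = richness S L := by
  classical
  simp only [richness_eq_card_filter, Finset.filter_comm _ (· ∈ L)]
  exact Finset.card_filter_add_card_filter_not _

theorem richness_union [DecidableEq (ℝ × ℝ)] {P Q : Finset (ℝ × ℝ)} (hPQ : Disjoint P Q) :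
    richness (P ∪ Q) L = richness P L + richness Q L := by
  classical
  simp only [richness_eq_card_filter, Finset.filter_union]
  exact Finset.card_union_of_disjoint (Finset.disjoint_filter_filter hPQ)

end Richness

section Counting

variable {S : Finset (ℝ × ℝ)} {𝓛 : Finset (Set (ℝ × ℝ))}

-- The ordered pairs of distinct points of `S` lying on different lines are different.
theorem sum_sq_richness_le (h𝓛 : ∀ L ∈ 𝓛, IsLine L) :
    ∑ L ∈ 𝓛, richness S L ^ 2 ≤ #S ^ 2 + ∑ L ∈ 𝓛, richness S L := by
  classical
  have offDiag_disjoint : (𝓛 : Set (Set (ℝ × ℝ))).PairwiseDisjoint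
      fun L ↦ Finset.offDiag {p ∈ S | p ∈ L} := by
    intro L hL L' hL' hne
    refine Finset.disjoint_left.mpr fun ⟨p, q⟩ h h' ↦ ?_
    simp only [Finset.mem_offDiag, Finset.mem_filter] at h h'
    exact h.2.2 ((h𝓛 L hL).inter_subsingleton (h𝓛 L' hL') hne
      ⟨h.1.2, h'.1.2⟩ ⟨h.2.1.2, h'.2.1.2⟩)
  have pairs_subset : 𝓛.biUnion (fun L ↦ Finset.offDiag {p ∈ S | p ∈ L}) ⊆ S ×ˢ S := by
    intro x hx
    simp only [Finset.mem_biUnion, Finset.mem_offDiag, Finset.mem_filter] at hx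
    obtain ⟨L, -, h⟩ := hx
    exact Finset.mem_product.mpr ⟨h.1.1, h.2.1.1⟩
  calc ∑ L ∈ 𝓛, richness S L ^ 2
      = ∑ L ∈ 𝓛, (#(Finset.offDiag {p ∈ S | p ∈ L}) + richness S L) := by
        refine Finset.sum_congr rfl fun L _ ↦ ?_
        rw [Finset.offDiag_card, richness_eq_card_filter, sq,
          Nat.sub_add_cancel (Nat.le_mul_self _)]
    _ = #(𝓛.biUnion fun L ↦ Finset.offDiag {p ∈ S | p ∈ L}) + ∑ L ∈ 𝓛, richness S L := by
        rw [Finset.sum_add_distrib, Finset.card_biUnion offDiag_disjoint]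
    _ ≤ #S ^ 2 + ∑ L ∈ 𝓛, richness S L := by
        rw [sq, ← Finset.card_product]
        gcongr

theorem card_mul_card_le_sum_richness_mul_richness {P Q : Finset (ℝ × ℝ)}
    (hcover : ∀ p ∈ P, ∀ q ∈ Q, ∃ L ∈ 𝓛, p ∈ L ∧ q ∈ L) :
    #P * #Q ≤ ∑ L ∈ 𝓛, richness P L * richness Q L := by
  classical
  calc #P * #Q = #(P ×ˢ Q) := (Finset.card_product P Q).symm
    _ ≤ #(𝓛.biUnion fun L ↦ {p ∈ P | p ∈ L} ×ˢ {q ∈ Q | q ∈ L}) := by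
        refine Finset.card_le_card fun ⟨p, q⟩ hpq ↦ ?_
        obtain ⟨hp, hq⟩ := Finset.mem_product.mp hpq
        obtain ⟨L, hL, hpL, hqL⟩ := hcover p hp q hq
        simp only [Finset.mem_biUnion, Finset.mem_product, Finset.mem_filter]
        exact ⟨L, hL, ⟨hp, hpL⟩, hq, hqL⟩
    _ ≤ ∑ L ∈ 𝓛, richness P L * richness Q L := by
        refine Finset.card_biUnion_le.trans_eq (Finset.sum_congr rfl fun L _ ↦ ?_)
        rw [Finset.card_product, richness_eq_card_filter, richness_eq_card_filter]

end Counting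

section Cells

variable {S : Finset (ℝ × ℝ)}

theorem card_filter_linearMap_eq_le {k : ℕ} (hpoor : ∀ L, IsLine L → k * richness S L ≤ #S)
    {T : Finset (ℝ × ℝ)} (hTS : T ⊆ S) {f : ℝ × ℝ →ₗ[ℝ] ℝ} (hf : f ≠ 0) (c : ℝ) :
    k * #{p ∈ T | f p = c} ≤ #S := by
  calc k * #{p ∈ T | f p = c} = k * richness T {x | f x = c} := by
        rw [richness_eq_card_filter]; rfl
    _ ≤ k * richness S {x | f x = c} := by gcongr; exact richness_mono hTS _
    _ ≤ #S := hpoor _ (isLine_setOf_linearMap_eq hf c)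

theorem IsMedian.mul_card_le_of_poor {k : ℕ} (hpoor : ∀ L, IsLine L → k * richness S L ≤ #S)
    {T : Finset (ℝ × ℝ)} (hTS : T ⊆ S) {f : ℝ × ℝ →ₗ[ℝ] ℝ} (hf : f ≠ 0) {c : ℝ}
    (hc : IsMedian T f c) (side : Bool) :
    k * #T ≤ 2 * (k * #{p ∈ T | decide (f p < c) = side}) + 2 * #S := by
  have := card_filter_linearMap_eq_le hpoor hTS hf c
  cases side <;> simp only [decide_eq_true_eq, decide_eq_false_iff_not]
  · nlinarith [hc.card_le_two_mul_card_ge]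
  · nlinarith [hc.card_le_two_mul_card_lt_add]

theorem exists_balanced_quadrants (hS : S.Nonempty)
    (hpoor : ∀ L, IsLine L → 16 * richness S L ≤ #S) :
    ∃ (f g : ℝ × ℝ →ₗ[ℝ] ℝ) (a b : ℝ), ∀ i, #S ≤ 16 * #{p ∈ S | quadrant f g a b p = i} := by
  set f := LinearMap.fst ℝ ℝ ℝ
  have hf : f ≠ 0 := fun h ↦ one_ne_zero (LinearMap.congr_fun h (1, 0))
  set a := upperMedian S hS f
  set half : Bool → Finset (ℝ × ℝ) := fun i ↦ {p ∈ S | decide (f p < a) = i}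
  have half_subset (i) : half i ⊆ S := S.filter_subset _
  have card_half (i) : 16 * #S ≤ 2 * (16 * #(half i)) + 2 * #S :=
    (isMedian_upperMedian hS f).mul_card_le_of_poor hpoor subset_rfl hf i
  have half_nonempty (i) : (half i).Nonempty := by
    have := card_half i
    have := hS.card_pos
    exact Finset.card_pos.mp (by lia)
  obtain ⟨s, b, hbtrue, hbfalse⟩ := exists_common_isMedian (g := f) (half_nonempty true)
    (half_nonempty false) (by grind) Prod.snd
  set g := LinearMap.snd ℝ ℝ ℝ - s • f
  have hg : g ≠ 0 := fun h ↦
    one_ne_zero (α := ℝ) (by simpa [g, f] using LinearMap.congr_fun h (0, 1))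
  have hb (i) : IsMedian (half i) g b := by cases i <;> assumption
  refine ⟨f, g, a, b, fun (i, j) ↦ ?_⟩
  have card_quarter := (hb i).mul_card_le_of_poor hpoor (half_subset i) hg j
  have quarter_eq : {p ∈ S | quadrant f g a b p = (i, j)} =
      {p ∈ half i | decide (g p < b) = j} := by
    simp only [half, quadrant, Prod.mk.injEq, Finset.filter_filter]
  rw [quarter_eq]
  have := card_half i
  lia

end Cells

section Inequalities

theorem sq_sum_le_of_eq_zero {ι : Type*} [Fintype ι] {r w : ι → ℝ} (hw : ∀ i, 0 < w i) {i₀ : ι}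
    (hr : r i₀ = 0) : (∑ i, r i) ^ 2 ≤ (∑ i, w i - w i₀) * ∑ i, r i ^ 2 / w i := by
  classical
  have cauchy := Finset.sum_sq_le_sum_mul_sum_of_sq_le_mul (Finset.univ.erase i₀) (r := r)
    (f := w) (g := fun i ↦ r i ^ 2 / w i) (fun i _ ↦ (hw i).le)
    (fun i _ ↦ div_nonneg (sq_nonneg _) (hw i).le)
    (fun i _ ↦ (mul_div_cancel₀ _ (hw i).ne').ge)
  have sum_sq_div : ∑ i ∈ Finset.univ.erase i₀, r i ^ 2 / w i = ∑ i, r i ^ 2 / w i :=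
    Finset.sum_erase _ (by rw [hr, sq, zero_mul, zero_div])
  rwa [Finset.sum_erase _ hr, sum_sq_div,
    Finset.sum_erase_eq_sub (Finset.mem_univ i₀)] at cauchy

theorem add_sq_le_div_add_div (x y : ℝ) {δ : ℝ} (hδ : 0 < δ) (hδ_lt : δ < 1) :
    (x + y) ^ 2 ≤ x ^ 2 / (1 - δ) + y ^ 2 / δ := by
  have := sub_pos.mpr hδ_lt
  rw [div_add_div _ _ this.ne' hδ.ne', le_div_iff₀ (by positivity)]
  linarith [sq_nonneg (δ * x - (1 - δ) * y)]

end Inequalities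

section Energy

variable {S : Finset (ℝ × ℝ)} {𝓛 : Finset (Set (ℝ × ℝ))} {M a b δ : ℝ}

/-- The estimate `∑ r(L)² ≤ a |S|² + b (I + M |S|)` for the second moment of the richness over a
family `𝓛` of lines, where `I` is the number of incidences between `S` and `𝓛`. The number `M` will
be an upper bound for the richness of the lines of `𝓛`. -/
def SecondMomentBound (𝓛 : Finset (Set (ℝ × ℝ))) (M a b : ℝ) (S : Finset (ℝ × ℝ)) : Prop :=
  ∑ L ∈ 𝓛, (richness S L : ℝ) ^ 2 ≤ a * (#S : ℝ) ^ 2 + b * (∑ L ∈ 𝓛, (richness S L : ℝ) + M * #S)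

theorem secondMomentBound_one_one (h𝓛 : ∀ L ∈ 𝓛, IsLine L) (hM : 0 ≤ M) :
    SecondMomentBound 𝓛 M 1 1 S := by
  have pairs : ∑ L ∈ 𝓛, (richness S L : ℝ) ^ 2 ≤ (#S : ℝ) ^ 2 + ∑ L ∈ 𝓛, (richness S L : ℝ) := by
    exact_mod_cast sum_sq_richness_le h𝓛
  have : 0 ≤ M * #S := by positivity
  unfold SecondMomentBound
  linarith

-- Cauchy–Schwarz with weights `|cell|`: the cell missed by a line saves a factor `1 - δ`.
theorem sq_richness_le_of_forall_ne {ι : Type*} [Fintype ι] [DecidableEq ι] {σ : ℝ × ℝ → ι}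
    (hne : ∀ i, {p ∈ S | σ p = i}.Nonempty) {i₀ : ι} (hcell : δ * #S ≤ #{p ∈ S | σ p = i₀})
    {L : Set (ℝ × ℝ)} (hmiss : ∀ p ∈ L, σ p ≠ i₀) :
    (richness S L : ℝ) ^ 2 ≤ (1 - δ) * #S *
      ∑ i, (richness {p ∈ S | σ p = i} L : ℝ) ^ 2 / #{p ∈ S | σ p = i} := by
  classical
  have richness_missed : (richness {p ∈ S | σ p = i₀} L : ℝ) = 0 := by
    rw [richness_eq_card_filter, Nat.cast_eq_zero, Finset.card_eq_zero, Finset.filter_filter,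
      Finset.filter_eq_empty_iff]
    exact fun p _ ⟨hσ, hpL⟩ ↦ hmiss p hpL hσ
  have card_eq : ∑ i, (#{p ∈ S | σ p = i} : ℝ) = #S := by
    exact_mod_cast (Finset.card_eq_sum_card_fiberwise fun p _ ↦ Finset.mem_univ (σ p)).symm
  rw [richness_eq_sum_filter S L σ, Nat.cast_sum]
  refine (sq_sum_le_of_eq_zero (fun i ↦ Nat.cast_pos.mpr (hne i).card_pos) richness_missed).trans ?_
  rw [card_eq]
  exact mul_le_mul_of_nonneg_right (by linarith [hcell])
    (Finset.sum_nonneg fun i _ ↦ by positivity)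

theorem SecondMomentBound.mul_sum_div_card_le {N : ℝ} (hbound : SecondMomentBound 𝓛 M a b S)
    (hS : S.Nonempty) (hδ : 0 < δ) (hδ_le : δ ≤ 1) (hN : 0 ≤ N) (hNS : δ * N ≤ #S) (hM : 0 ≤ M)
    (hb : 0 ≤ b) :
    (1 - δ) * N * ((∑ L ∈ 𝓛, (richness S L : ℝ) ^ 2) / #S) ≤
      (1 - δ) * a * N * #S + δ⁻¹ * b * (∑ L ∈ 𝓛, (richness S L : ℝ) + M * #S) := by
  set X : ℝ := ∑ L ∈ 𝓛, (richness S L : ℝ) + M * #S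
  have : 0 ≤ X := by positivity
  have card_pos : (0 : ℝ) < #S := Nat.cast_pos.mpr hS.card_pos
  have : 0 ≤ 1 - δ := sub_nonneg.mpr hδ_le
  have ratio_le : N / #S ≤ δ⁻¹ := by
    rwa [div_le_iff₀ card_pos, inv_mul_eq_div, le_div_iff₀' hδ]
  calc (1 - δ) * N * ((∑ L ∈ 𝓛, (richness S L : ℝ) ^ 2) / #S)
      = (1 - δ) * (N / #S) * ∑ L ∈ 𝓛, (richness S L : ℝ) ^ 2 := by ring
    _ ≤ (1 - δ) * (N / #S) * (a * (#S : ℝ) ^ 2 + b * X) := by gcongr; exact hbound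
    _ = (1 - δ) * a * N * #S + (1 - δ) * (N / #S) * (b * X) := by field_simp
    _ ≤ (1 - δ) * a * N * #S + 1 * δ⁻¹ * (b * X) := by gcongr; linarith
    _ = (1 - δ) * a * N * #S + δ⁻¹ * b * X := by ring

theorem SecondMomentBound.of_cells {ι : Type*} [Finite ι] [DecidableEq ι] {σ : ℝ × ℝ → ι}
    (hmiss : ∀ L ∈ 𝓛, ∃ i, ∀ p ∈ L, σ p ≠ i) (hS : S.Nonempty) (hδ : 0 < δ) (hδ_le : δ ≤ 1)
    (hcell : ∀ i, δ * #S ≤ #{p ∈ S | σ p = i}) (hM : 0 ≤ M) (hb : 0 ≤ b)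
    (hbound : ∀ i, SecondMomentBound 𝓛 M a b {p ∈ S | σ p = i}) :
    SecondMomentBound 𝓛 M ((1 - δ) * a) (δ⁻¹ * b) S := by
  cases nonempty_fintype ι
  set cell : ι → Finset (ℝ × ℝ) := fun i ↦ {p ∈ S | σ p = i}
  have cell_nonempty (i) : (cell i).Nonempty :=
    Finset.card_pos.mp (Nat.cast_pos.mp ((by positivity : 0 < δ * #S).trans_le (hcell i)))
  have card_eq : ∑ i, (#(cell i) : ℝ) = #S := by
    exact_mod_cast (Finset.card_eq_sum_card_fiberwise fun p _ ↦ Finset.mem_univ (σ p)).symm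
  have incidences_eq : ∑ i, ∑ L ∈ 𝓛, (richness (cell i) L : ℝ) = ∑ L ∈ 𝓛, (richness S L : ℝ) := by
    rw [Finset.sum_comm]
    simp only [cell, richness_eq_sum_filter S _ σ, Nat.cast_sum]
  calc ∑ L ∈ 𝓛, (richness S L : ℝ) ^ 2
      ≤ ∑ L ∈ 𝓛, (1 - δ) * #S * ∑ i, (richness (cell i) L : ℝ) ^ 2 / #(cell i) := by
        refine Finset.sum_le_sum fun L hL ↦ ?_
        obtain ⟨i₀, hi₀⟩ := hmiss L hL
        exact sq_richness_le_of_forall_ne cell_nonempty (hcell i₀) hi₀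
    _ = ∑ i, (1 - δ) * #S * ((∑ L ∈ 𝓛, (richness (cell i) L : ℝ) ^ 2) / #(cell i)) := by
        rw [← Finset.mul_sum, Finset.sum_comm, Finset.mul_sum]
        simp only [Finset.sum_div]
    _ ≤ ∑ i, ((1 - δ) * a * #S * #(cell i) +
          δ⁻¹ * b * (∑ L ∈ 𝓛, (richness (cell i) L : ℝ) + M * #(cell i))) :=
        Finset.sum_le_sum fun i _ ↦ (hbound i).mul_sum_div_card_le (cell_nonempty i) hδ hδ_le
          (Nat.cast_nonneg _) (hcell i) hM hb
    _ = (1 - δ) * a * (#S : ℝ) ^ 2 + δ⁻¹ * b * (∑ L ∈ 𝓛, (richness S L : ℝ) + M * #S) := by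
        simp only [Finset.sum_add_distrib, ← Finset.mul_sum, card_eq, incidences_eq]
        ring

theorem richness_filter_mem_le_one {L ℓ : Set (ℝ × ℝ)} [DecidablePred (· ∈ ℓ)] (hL : IsLine L)
    (hℓ : IsLine ℓ) (hne : L ≠ ℓ) : richness {p ∈ S | p ∈ ℓ} L ≤ 1 := by
  classical
  rw [richness_eq_card_filter, Finset.card_le_one]
  intro p hp q hq
  simp only [Finset.mem_filter] at hp hq
  exact hL.inter_subsingleton hℓ hne ⟨hp.2, hp.1.2⟩ ⟨hq.2, hq.1.2⟩

theorem sq_richness_le_of_ne {L ℓ : Set (ℝ × ℝ)} [DecidablePred (· ∈ ℓ)] (hL : IsLine L)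
    (hℓ : IsLine ℓ) (hne : L ≠ ℓ) (hδ : 0 < δ) (hδ_lt : δ < 1) :
    (richness S L : ℝ) ^ 2 ≤
      (richness {p ∈ S | p ∉ ℓ} L : ℝ) ^ 2 / (1 - δ) + richness {p ∈ S | p ∈ ℓ} L / δ := by
  have sq_eq : (richness {p ∈ S | p ∈ ℓ} L : ℝ) ^ 2 = richness {p ∈ S | p ∈ ℓ} L := by
    have := richness_filter_mem_le_one (S := S) hL hℓ hne
    interval_cases richness {p ∈ S | p ∈ ℓ} L <;> norm_num
  rw [← richness_filter_add_richness_filter_not S L (· ∈ ℓ), add_comm, Nat.cast_add]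
  simpa only [sq_eq] using add_sq_le_div_add_div (richness {p ∈ S | p ∉ ℓ} L : ℝ)
    (richness {p ∈ S | p ∈ ℓ} L : ℝ) hδ hδ_lt

theorem sum_sq_richness_le_of_line {ℓ : Set (ℝ × ℝ)} [DecidablePred (· ∈ ℓ)]
    (h𝓛 : ∀ L ∈ 𝓛, IsLine L) (hℓ : IsLine ℓ) (hM : 0 ≤ M) (hrich_le : ∀ L ∈ 𝓛, richness S L ≤ M)
    (hδ : 0 < δ) (hδ_lt : δ < 1) :
    ∑ L ∈ 𝓛, (richness S L : ℝ) ^ 2 ≤ (∑ L ∈ 𝓛, (richness {p ∈ S | p ∉ ℓ} L : ℝ) ^ 2) / (1 - δ) +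
      (∑ L ∈ 𝓛, (richness {p ∈ S | p ∈ ℓ} L : ℝ)) / δ + M * #{p ∈ S | p ∈ ℓ} := by
  classical
  have sq_le (L) (hL : L ∈ 𝓛) : (richness S L : ℝ) ^ 2 ≤
      (richness {p ∈ S | p ∉ ℓ} L : ℝ) ^ 2 / (1 - δ) + richness {p ∈ S | p ∈ ℓ} L / δ +
        if L = ℓ then M * #{p ∈ S | p ∈ ℓ} else 0 := by
    split_ifs with hLℓ
    · subst hLℓ
      have := sub_pos.mpr hδ_lt
      have : (richness S L : ℝ) ^ 2 ≤ M * #{p ∈ S | p ∈ L} := by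
        rw [sq, ← richness_eq_card_filter]
        gcongr
        exact hrich_le L hL
      refine this.trans (le_add_of_nonneg_left (by positivity))
    · rw [add_zero]
      exact sq_richness_le_of_ne (h𝓛 L hL) hℓ hLℓ hδ hδ_lt
  refine (Finset.sum_le_sum sq_le).trans ?_
  rw [Finset.sum_add_distrib, Finset.sum_add_distrib, ← Finset.sum_div, ← Finset.sum_div,
    Finset.sum_ite_eq']
  gcongr
  split_ifs
  · rfl
  · positivity

theorem SecondMomentBound.of_rich_line {ℓ : Set (ℝ × ℝ)} [DecidablePred (· ∈ ℓ)]
    (h𝓛 : ∀ L ∈ 𝓛, IsLine L) (hℓ : IsLine ℓ) (hM : 0 ≤ M) (hrich_le : ∀ L ∈ 𝓛, richness S L ≤ M)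
    (hδ : 0 < δ) (hδ_le : δ ≤ 1 / 2) (hrich : δ * #S ≤ richness S ℓ) (ha : 0 ≤ a) (hb : 1 ≤ b)
    (hbound : SecondMomentBound 𝓛 M a b {p ∈ S | p ∉ ℓ}) :
    SecondMomentBound 𝓛 M ((1 - δ) * a) (δ⁻¹ * b) S := by
  set A : Finset (ℝ × ℝ) := {p ∈ S | p ∈ ℓ}
  set T : Finset (ℝ × ℝ) := {p ∈ S | p ∉ ℓ}
  set I : Finset (ℝ × ℝ) → ℝ := fun R ↦ ∑ L ∈ 𝓛, (richness R L : ℝ)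
  have I_nonneg (R) : 0 ≤ I R := Finset.sum_nonneg fun _ _ ↦ Nat.cast_nonneg _
  have one_sub_pos : 0 < 1 - δ := by linarith
  have card_add : (#A : ℝ) + #T = #S := by
    exact_mod_cast S.card_filter_add_card_filter_not (· ∈ ℓ)
  have I_add : I A + I T = I S := by
    simp only [I, ← Finset.sum_add_distrib, ← Nat.cast_add, A, T,
      richness_filter_add_richness_filter_not]
  replace hrich : (#T : ℝ) ≤ (1 - δ) * #S := by
    rw [richness_eq_card_filter] at hrich
    linarith
  calc ∑ L ∈ 𝓛, (richness S L : ℝ) ^ 2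
      ≤ (∑ L ∈ 𝓛, (richness T L : ℝ) ^ 2) / (1 - δ) + I A / δ + M * #A :=
        sum_sq_richness_le_of_line h𝓛 hℓ hM hrich_le hδ (by linarith)
    _ ≤ (a * ((1 - δ) * #S) ^ 2 + b * (I T + M * #T)) / (1 - δ) + I A / δ + M * #A := by
        gcongr
        exact hbound.trans (by gcongr)
    _ = (1 - δ) * a * (#S : ℝ) ^ 2 +
          (b * (1 - δ)⁻¹ * (I T + M * #T) + 1 * δ⁻¹ * I A + 1 * 1 * (M * #A)) := by
        field_simp
        ring
    _ ≤ (1 - δ) * a * (#S : ℝ) ^ 2 +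
          (b * δ⁻¹ * (I T + M * #T) + b * δ⁻¹ * I A + b * δ⁻¹ * (M * #A)) := by
        have := I_nonneg A
        have := I_nonneg T
        gcongr
        · linarith
        · exact (one_le_inv₀ hδ).mpr (by linarith)
    _ = (1 - δ) * a * (#S : ℝ) ^ 2 + δ⁻¹ * b * (I S + M * #S) := by
        rw [← I_add, ← card_add]
        ring

theorem secondMomentBound_pow (h𝓛 : ∀ L ∈ 𝓛, IsLine L) (hM : 0 ≤ M)
    (hrich_le : ∀ L ∈ 𝓛, richness S L ≤ M) (j : ℕ) :
    SecondMomentBound 𝓛 M ((15 / 16) ^ j) (16 ^ j) S := by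
  classical
  induction j generalizing S with
  | zero => simpa only [pow_zero] using secondMomentBound_one_one h𝓛 hM
  | succ j ih =>
    have bound_of_subset {T : Finset (ℝ × ℝ)} (hT : T ⊆ S) :
        SecondMomentBound 𝓛 M ((15 / 16) ^ j) (16 ^ j) T :=
      ih fun L hL ↦ (Nat.cast_le.mpr (richness_mono hT L)).trans (hrich_le L hL)
    suffices SecondMomentBound 𝓛 M ((1 - 1 / 16) * (15 / 16) ^ j) ((1 / 16)⁻¹ * 16 ^ j) S by
      convert this using 1 <;> ring
    obtain rfl | hS := S.eq_empty_or_nonempty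
    · simp [SecondMomentBound, richness]
    by_cases hpoor : ∀ L, IsLine L → 16 * richness S L ≤ #S
    · obtain ⟨f, g, c, d, hcell⟩ := exists_balanced_quadrants hS hpoor
      have card_le (i) : 1 / 16 * (#S : ℝ) ≤ #{p ∈ S | quadrant f g c d p = i} := by
        have : (#S : ℝ) ≤ 16 * #{p ∈ S | quadrant f g c d p = i} := by exact_mod_cast hcell i
        linarith
      exact .of_cells (fun L hL ↦ (h𝓛 L hL).exists_forall_quadrant_ne f g c d) hS
        (by norm_num) (by norm_num) card_le hM (by positivity)
        fun i ↦ bound_of_subset (S.filter_subset _)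
    · push Not at hpoor
      obtain ⟨ℓ, hℓ, hrich⟩ := hpoor
      have card_le : 1 / 16 * (#S : ℝ) ≤ richness S ℓ := by
        have : (#S : ℝ) ≤ 16 * richness S ℓ := by exact_mod_cast hrich.le
        linarith
      exact .of_rich_line h𝓛 hℓ hM hrich_le (by norm_num) (by norm_num) card_le (by positivity)
        (one_le_pow₀ (by norm_num)) (bound_of_subset (S.filter_subset _))

end Energy

section RichLines

variable {S : Finset (ℝ × ℝ)} {𝓛 : Finset (Set (ℝ × ℝ))}

-- On `2 * 16 ^ j`-rich lines the incidence term of `secondMomentBound_pow` is at most half of the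
-- left-hand side.
theorem exists_forall_sum_sq_richness_le {ε : ℝ} (hε : 0 < ε) :
    ∃ K η : ℝ, 0 < K ∧ 0 < η ∧ ∀ (S : Finset (ℝ × ℝ)) (𝓛 : Finset (Set (ℝ × ℝ))),
      (∀ L ∈ 𝓛, IsLine L) → (∀ L ∈ 𝓛, K ≤ richness S L) → (∀ L ∈ 𝓛, richness S L ≤ η * #S) →
      ∑ L ∈ 𝓛, (richness S L : ℝ) ^ 2 ≤ ε * (#S : ℝ) ^ 2 := by
  obtain ⟨j, hj⟩ := exists_pow_lt_of_lt_one (show 0 < ε / 4 by positivity)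
    (show (15 / 16 : ℝ) < 1 by norm_num)
  refine ⟨2 * 16 ^ j, ε / 4 / 16 ^ j, by positivity, by positivity, ?_⟩
  intro S 𝓛 h𝓛 hK hη
  set N := (#S : ℝ)
  set I : ℝ := ∑ L ∈ 𝓛, (richness S L : ℝ)
  set E : ℝ := ∑ L ∈ 𝓛, (richness S L : ℝ) ^ 2
  have incidences_le : 2 * 16 ^ j * I ≤ E := by
    rw [Finset.mul_sum]
    refine Finset.sum_le_sum fun L hL ↦ ?_
    rw [sq]
    gcongr
    exact hK L hL
  have second_moment : E ≤ (15 / 16) ^ j * N ^ 2 + 16 ^ j * (I + ε / 4 / 16 ^ j * N * N) :=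
    secondMomentBound_pow h𝓛 (by positivity) hη j
  have main_term : (15 / 16) ^ j * N ^ 2 ≤ ε / 4 * N ^ 2 := by gcongr
  have error_term : (16 : ℝ) ^ j * (ε / 4 / 16 ^ j * N * N) = ε / 4 * N ^ 2 := by field_simp
  linarith

theorem sum_sq_richness_le_two_mul (h𝓛 : ∀ L ∈ 𝓛, IsLine L) (htwo : ∀ L ∈ 𝓛, 2 ≤ richness S L) :
    ∑ L ∈ 𝓛, richness S L ^ 2 ≤ 2 * #S ^ 2 := by
  have incidences_le : 2 * ∑ L ∈ 𝓛, richness S L ≤ ∑ L ∈ 𝓛, richness S L ^ 2 := by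
    rw [Finset.mul_sum]
    exact Finset.sum_le_sum fun L hL ↦ by rw [sq]; gcongr; exact htwo L hL
  have := sum_sq_richness_le (S := S) h𝓛
  lia

end RichLines

section Bichromatic

variable {P Q : Finset (ℝ × ℝ)} {𝓛 : Finset (Set (ℝ × ℝ))}

theorem finite_bichromLines (hPQ : Disjoint P Q) : (BichromLines P Q).Finite := by
  refine ((P ×ˢ Q).finite_toSet.image fun x ↦ lineThrough x.1 x.2).subset ?_
  rintro L ⟨hL, ⟨p, hp, hpL⟩, q, hq, hqL⟩
  have hpq : p ≠ q := hPQ.forall_ne_finset hp hq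
  exact ⟨(p, q), Finset.mem_coe.mpr (Finset.mk_mem_product hp hq),
    (hL.eq_lineThrough hpq hpL hqL).symm⟩

theorem exists_mem_bichromLines (hPQ : Disjoint P Q) {p q : ℝ × ℝ} (hp : p ∈ P) (hq : q ∈ Q) :
    ∃ L ∈ BichromLines P Q, p ∈ L ∧ q ∈ L := by
  have hpq : p ≠ q := hPQ.forall_ne_finset hp hq
  exact ⟨lineThrough p q, ⟨⟨p, q, hpq, rfl⟩, ⟨p, hp, left_mem_lineThrough p q⟩,
    q, hq, right_mem_lineThrough p q⟩, left_mem_lineThrough p q, right_mem_lineThrough p q⟩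

variable [DecidableEq (ℝ × ℝ)]

theorem two_le_richness_union (hPQ : Disjoint P Q) {L : Set (ℝ × ℝ)} (hL : L ∈ BichromLines P Q) :
    2 ≤ richness (P ∪ Q) L := by
  have hP := richness_pos_iff.mpr hL.2.1
  have hQ := richness_pos_iff.mpr hL.2.2
  rw [richness_union L hPQ]
  lia

theorem richness_mul_richness_le_sq (L : Set (ℝ × ℝ)) :
    (richness P L * richness Q L : ℝ) ≤ (richness (P ∪ Q) L : ℝ) ^ 2 := by
  rw [sq]
  gcongr
  · exact richness_mono Finset.subset_union_left L
  · exact richness_mono Finset.subset_union_right L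

theorem sum_richness_mul_richness_le_of_unbalanced {c : ℝ} (h𝓛 : ∀ L ∈ 𝓛, IsLine L)
    (htwo : ∀ L ∈ 𝓛, 2 ≤ richness (P ∪ Q) L)
    (hunbalanced : ∀ L ∈ 𝓛, richness P L ≤ c * richness (P ∪ Q) L ∨
      richness Q L ≤ c * richness (P ∪ Q) L) (hc : 0 ≤ c) :
    ∑ L ∈ 𝓛, (richness P L * richness Q L : ℝ) ≤ 2 * c * (#(P ∪ Q) : ℝ) ^ 2 := by
  have mul_le (L) (hL : L ∈ 𝓛) :
      (richness P L * richness Q L : ℝ) ≤ c * (richness (P ∪ Q) L : ℝ) ^ 2 := by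
    have hP : (richness P L : ℝ) ≤ richness (P ∪ Q) L :=
      Nat.cast_le.mpr (richness_mono Finset.subset_union_left L)
    have hQ : (richness Q L : ℝ) ≤ richness (P ∪ Q) L :=
      Nat.cast_le.mpr (richness_mono Finset.subset_union_right L)
    obtain h | h := hunbalanced L hL
    · rw [sq, ← mul_assoc]; gcongr
    · rw [sq, mul_left_comm]; gcongr
  have sum_sq_le : ∑ L ∈ 𝓛, (richness (P ∪ Q) L : ℝ) ^ 2 ≤ 2 * (#(P ∪ Q) : ℝ) ^ 2 := by
    exact_mod_cast sum_sq_richness_le_two_mul h𝓛 htwo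
  calc ∑ L ∈ 𝓛, (richness P L * richness Q L : ℝ)
      ≤ c * ∑ L ∈ 𝓛, (richness (P ∪ Q) L : ℝ) ^ 2 := by
        rw [Finset.mul_sum]
        exact Finset.sum_le_sum mul_le
    _ ≤ c * (2 * (#(P ∪ Q) : ℝ) ^ 2) := by gcongr
    _ = 2 * c * (#(P ∪ Q) : ℝ) ^ 2 := by ring

theorem sum_richness_mul_richness_le_of_poor {K : ℝ}
    (hpoor : ∀ L ∈ 𝓛, richness (P ∪ Q) L ≤ K) :
    ∑ L ∈ 𝓛, (richness P L * richness Q L : ℝ) ≤ K ^ 2 * #𝓛 := by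
  rw [mul_comm, ← nsmul_eq_mul]
  refine Finset.sum_le_card_nsmul _ _ _ fun L hL ↦ ?_
  calc (richness P L * richness Q L : ℝ) ≤ (richness (P ∪ Q) L : ℝ) ^ 2 :=
        richness_mul_richness_le_sq L
    _ ≤ K ^ 2 := by gcongr; exact hpoor L hL

theorem exists_forall_sum_richness_mul_richness_le {ε : ℝ} (hε : 0 < ε) :
    ∃ K η : ℝ, 0 < K ∧ 0 < η ∧ ∀ (P Q : Finset (ℝ × ℝ)) (𝓛 : Finset (Set (ℝ × ℝ))),
      (∀ L ∈ 𝓛, IsLine L) → (∀ L ∈ 𝓛, 2 ≤ richness (P ∪ Q) L) →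
      (∀ L ∈ 𝓛, richness P L ≤ η * #(P ∪ Q) ∨ richness Q L ≤ η * #(P ∪ Q)) →
      ∑ L ∈ 𝓛, (richness P L * richness Q L : ℝ) ≤ K * #𝓛 + ε * (#(P ∪ Q) : ℝ) ^ 2 := by
  obtain ⟨K, η, hK, hη, hmoment⟩ := exists_forall_sum_sq_richness_le (half_pos hε)
  refine ⟨K ^ 2, ε / 4 * η, by positivity, by positivity, ?_⟩
  intro P Q 𝓛 h𝓛 htwo hunbalanced
  set r : Set (ℝ × ℝ) → ℝ := fun L ↦ richness (P ∪ Q) L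
  set m : Set (ℝ × ℝ) → ℝ := fun L ↦ richness P L * richness Q L
  set N := (#(P ∪ Q) : ℝ)
  set rest := {L ∈ 𝓛 | ¬ r L ≤ K}
  have poor : ∑ L ∈ 𝓛 with r L ≤ K, m L ≤ K ^ 2 * #𝓛 := by
    refine (sum_richness_mul_richness_le_of_poor fun L hL ↦ (Finset.mem_filter.mp hL).2).trans ?_
    gcongr
    exact Finset.filter_subset _ _
  have medium : ∑ L ∈ rest with r L ≤ η * N, m L ≤ ε / 2 * N ^ 2 := by
    refine (Finset.sum_le_sum fun L _ ↦ ?_).trans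
      (hmoment (P ∪ Q) {L ∈ rest | r L ≤ η * N} ?_ ?_ ?_)
    · exact richness_mul_richness_le_sq L
    all_goals grind
  have rich : ∑ L ∈ rest with ¬ r L ≤ η * N, m L ≤ 2 * (ε / 4) * N ^ 2 := by
    refine sum_richness_mul_richness_le_of_unbalanced (by grind) (by grind) (fun L hL ↦ ?_)
      (by positivity)
    have hrL : η * N ≤ r L := by grind
    have scaled : ε / 4 * η * N ≤ ε / 4 * r L := by
      rw [mul_assoc]
      gcongr
    exact (hunbalanced L (by grind)).imp scaled.trans' scaled.trans'
  calc ∑ L ∈ 𝓛, m L = ∑ L ∈ 𝓛 with r L ≤ K, m L + (∑ L ∈ rest with r L ≤ η * N, m L +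
        ∑ L ∈ rest with ¬ r L ≤ η * N, m L) := by
        rw [Finset.sum_filter_add_sum_filter_not, Finset.sum_filter_add_sum_filter_not]
    _ ≤ K ^ 2 * #𝓛 + ε * N ^ 2 := by linarith

end Bichromatic

/-- Bichromatic two-extremes lemma: either `(P, Q)` has at least `C · n²` bichromatic
induced lines, or some line contains at least `K₂ · n` points of each color. -/
theorem two_extremes :
    ∃ C K₂ : ℝ, 0 < C ∧ 0 < K₂ ∧ ∀ (P Q : Finset (ℝ × ℝ)) (n : ℕ),
      Disjoint P Q → P.card = n → Q.card = n →
      (C * (n : ℝ) ^ 2 ≤ ((BichromLines P Q).ncard : ℝ) ∨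
        ∃ L : Set (ℝ × ℝ), IsLine L ∧
          K₂ * (n : ℝ) ≤ ((((P : Set (ℝ × ℝ)) ∩ L).ncard : ℝ)) ∧
          K₂ * (n : ℝ) ≤ ((((Q : Set (ℝ × ℝ)) ∩ L).ncard : ℝ))) := by
  classical
  obtain ⟨K, η, hK, hη, hsum⟩ :=
    exists_forall_sum_richness_mul_richness_le (show (0 : ℝ) < 1 / 8 by norm_num)
  refine ⟨1 / (4 * K), η * 2, by positivity, by positivity, fun P Q n hPQ hP hQ ↦ ?_⟩
  by_contra! ⟨hfew, hunbalanced⟩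
  obtain ⟨𝓑, h𝓑⟩ := (finite_bichromLines hPQ).exists_finset_coe
  have mem_𝓑 {L} : L ∈ 𝓑 ↔ L ∈ BichromLines P Q := by rw [← h𝓑, Finset.mem_coe]
  rw [← h𝓑, Set.ncard_coe_finset, div_mul_eq_mul_div, lt_div_iff₀ (by positivity)] at hfew
  have card_union : (#(P ∪ Q) : ℝ) = 2 * n := by
    rw [Finset.card_union_of_disjoint hPQ, hP, hQ, Nat.cast_add, two_mul]
  have lower : (n : ℝ) * n ≤ ∑ L ∈ 𝓑, (richness P L * richness Q L : ℝ) := by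
    have hcover (p) (hp : p ∈ P) (q) (hq : q ∈ Q) : ∃ L ∈ 𝓑, p ∈ L ∧ q ∈ L := by
      simpa only [mem_𝓑] using exists_mem_bichromLines hPQ hp hq
    exact_mod_cast hP ▸ hQ ▸ card_mul_card_le_sum_richness_mul_richness hcover
  have upper := hsum P Q 𝓑 (fun L hL ↦ (mem_𝓑.mp hL).1)
    (fun L hL ↦ two_le_richness_union hPQ (mem_𝓑.mp hL)) fun L hL ↦ by
      rw [card_union, ← mul_assoc]
      exact or_iff_not_imp_left.mpr fun h ↦ (hunbalanced L (mem_𝓑.mp hL).1 (not_le.mp h).le).le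
  rw [card_union] at upper
  nlinarith
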